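/- Let G = MC be a central product of finite groups, i.e. M and C are subgroups of G with G = MC and every element of M commutes with every element of C, and let Z = M ∩ C, so that Z ≤ Z(G). Then for every linear character λ of Z one has acd(G|λ) = acd(M|λ) · acd(C|λ). -/

import Mathlib

open CategoryTheory

/-- The set of irreducible complex characters of `G`: characters of simple
finite-dimensional complex representations of `G`. -/
noncomputable def IrrChar (G : Type) [Group G] : Set (G → ℂ) :=
  {χ | ∃ V : FDRep ℂ G, Simple V ∧ χ = fun g => V.character g}

/-- The degree of a character, read off from its value at `1`. -/
noncomputable def charDeg {G : Type} [Group G] (χ : G → ℂ) : ℕ :=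
  ⌊(χ 1).re⌋₊

/-- The average degree of the irreducible characters of `G` satisfying a
predicate `p` (with the convention that the average of the empty set is `0`). -/
noncomputable def acdRel (G : Type) [Group G] (p : (G → ℂ) → Prop) : ℝ :=
  (∑ᶠ χ ∈ {χ ∈ IrrChar G | p χ}, (charDeg χ : ℝ)) /
    ({χ ∈ IrrChar G | p χ} : Set (G → ℂ)).ncard

/-- The average character degree of `G`. -/
noncomputable def acd (G : Type) [Group G] : ℝ := acdRel G fun _ => True
/-- The average degree of the irreducible characters of `H` lying over the
linear character `lam` of a central subgroup, embedded in `H` via `ι`. -/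
noncomputable def acdOver {H Z : Type} [Group H] [Group Z] (ι : Z → H) (lam : Z → ℂ) : ℝ :=
  acdRel H fun χ => ∑ᶠ z : Z, χ (ι z) * starRingEnd ℂ (lam z) ≠ 0

open Representation in
/-- Norm one for simple representations. -/
lemma aux_norm {H : Type} [Group H] [Fintype H] (V : FDRep ℂ H) [Simple V] :
    ∑ g : H, V.character g * V.character g⁻¹ = Nat.card H :=
  (FDRep.simple_iff_char_is_norm_one V).1 inferInstance

open Representation in
lemma aux_finrank_self {H : Type} [Group H] [Finite H] (V : FDRep ℂ H) [Simple V] :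
    Module.finrank ℂ (IntertwiningMap V.ρ V.ρ) = 1 := by
  have := Fintype.ofFinite H
  have h0 : (Nat.card H : ℂ) ≠ 0 := Nat.cast_ne_zero.2 Nat.card_pos.ne'
  have := invertibleOfNonzero h0
  have h := card_inv_mul_sum_char_mul_char_eq_finrank V.ρ V.ρ
  have h2 : ∑ g : H, Representation.character V.ρ g * Representation.character V.ρ g⁻¹
    = Nat.card H := aux_norm V
  rw [h2, inv_mul_cancel₀ h0] at h
  exact_mod_cast h.symm

lemma aux_pos {H : Type} [Group H] [Finite H] (V : FDRep ℂ H) [Simple V] :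
    0 < Module.finrank ℂ V := by
  rw [Module.finrank_pos_iff]
  by_contra hc
  rw [not_nontrivial_iff_subsingleton] at hc
  have h := aux_finrank_self V
  have : Subsingleton (Representation.IntertwiningMap V.ρ V.ρ) :=
    ⟨fun f g => by ext x; exact Subsingleton.elim (α := V) _ _⟩
  rw [Module.finrank_zero_of_subsingleton] at h
  omega

lemma aux_char_one_ne {H : Type} [Group H] [Finite H] (V : FDRep ℂ H) [Simple V] :
    V.character 1 ≠ 0 := by
  rw [FDRep.char_one]
  exact Nat.cast_ne_zero.2 (aux_pos V).ne'

/-- Schur for central elements. -/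
lemma aux_schur {H : Type} [Group H] [Finite H] (V : FDRep ℂ H) [Simple V] (z : H)
    (hz : ∀ h, h * z = z * h) : ∃ c : ℂ, V.ρ z = c • (1 : V →ₗ[ℂ] V) := by
  have h1 := aux_finrank_self V
  have hne : (1 : Representation.IntertwiningMap V.ρ V.ρ) ≠ 0 := by
    intro h
    have : Subsingleton (Representation.IntertwiningMap V.ρ V.ρ) :=
      subsingleton_of_zero_eq_one h.symm
    rw [Module.finrank_zero_of_subsingleton] at h1
    omega
  have hzc : z ∈ Submonoid.center H := Submonoid.mem_center_iff.2 hz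
  obtain ⟨c, hc⟩ := (finrank_eq_one_iff_of_nonzero' _ hne).1 h1
    (Representation.IntertwiningMap.centralMul V.ρ z hzc)
  refine ⟨c, ?_⟩
  have := congrArg Representation.IntertwiningMap.toLinearMap hc
  exact this.symm

lemma aux_char_scalar {H : Type} [Group H] (V : FDRep ℂ H) (z : H) (c : ℂ)
    (hc : V.ρ z = c • (1 : V →ₗ[ℂ] V)) (h : H) : V.character (h * z) = V.character h * c := by
  unfold FDRep.character
  rw [map_mul, hc, mul_smul_comm, mul_one, map_smul, smul_eq_mul, mul_comm]

/-- The central-character form of lying over. -/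
def OverLam {H Z : Type} [Group H] (ι : Z → H) (lam : Z → ℂ) (χ : H → ℂ) : Prop :=
  ∀ h z, χ (h * ι z) = χ h * lam z

lemma aux_over_scalar {H Z : Type} [Group H] [Finite H] (ι : Z → H) (lam : Z → ℂ)
    (hι : ∀ h z, h * ι z = ι z * h) (V : FDRep ℂ H) [Simple V]
    (ho : OverLam ι lam (fun g => V.character g)) (z : Z) :
    V.ρ (ι z) = lam z • (1 : V →ₗ[ℂ] V) := by
  obtain ⟨c, hc⟩ := aux_schur V (ι z) (fun h => hι h z)
  have h1 := aux_char_scalar V _ c hc 1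
  have h2 := ho 1 z
  simp only at h2
  rw [h1] at h2
  rw [hc, mul_left_cancel₀ (aux_char_one_ne V) h2]

lemma aux_lam {Z : Type} [Group Z] [Finite Z] (lam : Z → ℂ) (hlam : lam ∈ IrrChar Z)
    (hdeg : charDeg lam = 1) :
    (∀ x y, lam (x * y) = lam x * lam y) ∧ ∀ x, lam x * starRingEnd ℂ (lam x) = 1 := by
  obtain ⟨V, hV, rfl⟩ := hlam
  have hd : Module.finrank ℂ V = 1 := by
    simpa [charDeg, FDRep.char_one] using hdeg
  have key : ∀ f : V →ₗ[ℂ] V, f = LinearMap.trace ℂ V f • 1 := by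
    intro f
    have h1 : Module.finrank ℂ (V →ₗ[ℂ] V) = 1 := by
      rw [Module.finrank_linearMap, hd]
    have hn : (1 : V →ₗ[ℂ] V) ≠ 0 := by
      intro h
      have := LinearMap.trace_one ℂ V
      rw [h, hd] at this
      simp at this
    obtain ⟨c, hc⟩ := (finrank_eq_one_iff_of_nonzero' _ hn).1 h1 f
    rw [← hc, map_smul, LinearMap.trace_one, hd]
    simp
  have hmul : ∀ x y, V.character (x * y) = V.character x * V.character y := by
    intro x y
    exact aux_char_scalar V y _ (key _) x
  have h1 : V.character 1 = 1 := by simp [FDRep.char_one, hd]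
  refine ⟨hmul, fun x => ?_⟩
  let φ : Z →* ℂ := ⟨⟨fun x => V.character x, h1⟩, hmul⟩
  have hp : (V.character x) ^ Nat.card Z = 1 := by
    change (φ x) ^ Nat.card Z = 1
    rw [← map_pow, pow_card_eq_one', map_one]
  have hn : ‖V.character x‖ = 1 := Complex.norm_eq_one_of_pow_eq_one hp Nat.card_pos.ne'
  rw [Complex.mul_conj, Complex.normSq_eq_norm_sq, hn]
  simp

lemma aux_over_iff {H Z : Type} [Group H] [Finite H] [Group Z] [Finite Z] (ι : Z → H)
    (hmul : ∀ x y, ι (x * y) = ι x * ι y) (hι : ∀ h z, h * ι z = ι z * h)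
    (lam : Z → ℂ) (hlam : lam ∈ IrrChar Z)
    (hdeg : charDeg lam = 1) (χ : H → ℂ) (hχ : χ ∈ IrrChar H) :
    (∑ᶠ z : Z, χ (ι z) * starRingEnd ℂ (lam z) ≠ 0) ↔ OverLam ι lam χ := by
  have := Fintype.ofFinite Z
  obtain ⟨lm, ln⟩ := aux_lam lam hlam hdeg
  obtain ⟨V, hV, rfl⟩ := hχ
  rw [finsum_eq_sum_of_fintype]
  constructor
  · intro hs h z
    obtain ⟨c, hc⟩ := aux_schur V (ι z) (fun h => hι h z)
    have hcs := aux_char_scalar V _ c hc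
    have e : ∑ x : Z, V.character (ι x) * starRingEnd ℂ (lam x)
        = (∑ x : Z, V.character (ι x) * starRingEnd ℂ (lam x)) * (c * starRingEnd ℂ (lam z)) := by
      conv_lhs => rw [← Equiv.sum_comp (Equiv.mulRight z)]
      rw [Finset.sum_mul]
      refine Finset.sum_congr rfl fun x _ => ?_
      rw [Equiv.coe_mulRight, hmul, hcs, lm, map_mul]
      ring
    have h1 : c * starRingEnd ℂ (lam z) = 1 :=
      (mul_left_cancel₀ hs ((mul_one _).trans e)).symm
    have h2 : c = lam z := by
      have := ln z
      calc c = c * (lam z * starRingEnd ℂ (lam z)) := by rw [this, mul_one]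
        _ = lam z * (c * starRingEnd ℂ (lam z)) := by ring
        _ = lam z := by rw [h1, mul_one]
    simp only [hcs, h2]
  · intro ho
    have : ∀ x : Z, V.character (ι x) * starRingEnd ℂ (lam x) = V.character 1 := by
      intro x
      have := ho 1 x
      simp only [one_mul] at this
      rw [this, mul_assoc, ln, mul_one]
    simp only [this]
    rw [Finset.sum_const, nsmul_eq_mul]
    exact mul_ne_zero (by simp) (aux_char_one_ne V)

lemma aux_sum_surj {K G : Type} [Group K] [Group G] [Fintype K] [Fintype G] (f : K →* G)
    (hf : Function.Surjective f) (F : G → ℂ) :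
    (Nat.card G : ℂ) * ∑ k, F (f k) = Nat.card K * ∑ g, F g := by
  have h1 : ∑ k : K, ∑ g : G, F (f k * g) = Nat.card K * ∑ g, F g := by
    have : ∀ k : K, ∑ g : G, F (f k * g) = ∑ g, F g := fun k =>
      Equiv.sum_comp (Equiv.mulLeft (f k)) F
    simp [this]
  have h2 : ∑ g : G, ∑ k : K, F (f k * g) = Nat.card G * ∑ k, F (f k) := by
    have : ∀ g : G, ∑ k : K, F (f k * g) = ∑ k, F (f k) := fun g => by
      obtain ⟨x, rfl⟩ := hf g
      rw [← Equiv.sum_comp (Equiv.mulRight x) (fun k => F (f k))]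
      simp
    simp [this]
  rw [← h1, ← h2, Finset.sum_comm]

lemma aux_simple_pullback {K G : Type} [Group K] [Group G] [Finite K] [Finite G] (f : K →* G)
    (hf : Function.Surjective f) (U : FDRep ℂ G) (P : FDRep ℂ K)
    (hP : ∀ k, P.character k = U.character (f k)) : Simple U ↔ Simple P := by
  have := Fintype.ofFinite K
  have := Fintype.ofFinite G
  have hG : (Nat.card G : ℂ) ≠ 0 := Nat.cast_ne_zero.2 Nat.card_pos.ne'
  have hK : (Nat.card K : ℂ) ≠ 0 := Nat.cast_ne_zero.2 Nat.card_pos.ne'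
  rw [FDRep.simple_iff_char_is_norm_one, FDRep.simple_iff_char_is_norm_one]
  have h := aux_sum_surj f hf (fun g => U.character g * U.character g⁻¹)
  simp only [hP, map_inv]
  constructor
  · intro e
    rw [e, mul_comm] at h
    exact mul_right_cancel₀ hG h
  · intro e
    rw [e, mul_comm] at h
    exact (mul_left_cancel₀ hK h).symm

/-- External tensor product. -/
noncomputable def extProd {A B : Type} [Group A] [Group B] (V : FDRep ℂ A) (W : FDRep ℂ B) :
    FDRep ℂ (A × B) :=
  FDRep.of (Representation.tprod
    ((V.ρ.comp (MonoidHom.fst A B) : A × B →* (V →ₗ[ℂ] V)) : Representation ℂ (A × B) V)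
    ((W.ρ.comp (MonoidHom.snd A B) : A × B →* (W →ₗ[ℂ] W)) : Representation ℂ (A × B) W))

lemma extProd_char {A B : Type} [Group A] [Group B] (V : FDRep ℂ A) (W : FDRep ℂ B) (x : A × B) :
    (extProd V W).character x = V.character x.1 * W.character x.2 :=
  LinearMap.trace_tensorProduct' (V.ρ x.1) (W.ρ x.2)

lemma extProd_simple {A B : Type} [Group A] [Group B] [Finite A] [Finite B]
    (V : FDRep ℂ A) (W : FDRep ℂ B) [Simple V] [Simple W] : Simple (extProd V W) := by
  have := Fintype.ofFinite A
  have := Fintype.ofFinite B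
  rw [FDRep.simple_iff_char_is_norm_one]
  simp only [extProd_char]
  rw [Nat.card_prod, Nat.cast_mul, ← aux_norm V, ← aux_norm W, Finset.sum_mul_sum,
    Fintype.sum_prod_type]
  refine Finset.sum_congr rfl fun a _ => Finset.sum_congr rfl fun b _ => ?_
  simp only [Prod.fst_inv, Prod.snd_inv]
  ring

/-- Gluing. -/
lemma aux_glue {A B G : Type} [Group A] [Group B] [Group G] [Finite A] [Finite B] [Finite G]
    (f : A × B →* G) (hf : Function.Surjective f) (V : FDRep ℂ A) (W : FDRep ℂ B)
    [Simple V] [Simple W] (hk : ∀ x, f x = 1 → (extProd V W).ρ x = 1) :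
    ∃ U : FDRep ℂ G, Simple U ∧ ∀ x, U.character (f x) = V.character x.1 * W.character x.2 := by
  have hs := Function.surjInv_eq hf
  have key : ∀ x y, f x = f y → (extProd V W).ρ x = (extProd V W).ρ y := by
    intro x y h
    have h1 := hk (x * y⁻¹) (by rw [map_mul, map_inv, h, mul_inv_cancel])
    calc (extProd V W).ρ x = (extProd V W).ρ (x * y⁻¹ * y) := by simp
      _ = _ := by rw [map_mul, h1, one_mul]
  let r : Representation ℂ G (extProd V W) :=
    { toFun := fun g => (extProd V W).ρ (Function.surjInv hf g)
      map_one' := hk _ (hs 1)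
      map_mul' := fun a b => by
        rw [← map_mul]
        apply key
        rw [map_mul, hs, hs, hs] }
  have hr : ∀ x, (FDRep.of r).character (f x) = (extProd V W).character x := by
    intro x
    change LinearMap.trace ℂ _ ((extProd V W).ρ (Function.surjInv hf (f x))) = _
    rw [key _ _ (hs (f x))]
    rfl
  refine ⟨FDRep.of r, ?_, fun x => (hr x).trans (extProd_char V W x)⟩
  rw [aux_simple_pullback f hf (FDRep.of r) (extProd V W) (fun k => (hr k).symm)]
  exact extProd_simple V W

/-- Proportional irreducible characters are equal. -/
lemma aux_prop {H : Type} [Group H] [Finite H] (V V' : FDRep ℂ H) [Simple V] [Simple V']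
    (a b : ℕ) (ha : a ≠ 0) (h : ∀ g, V.character g * a = V'.character g * b) :
    ∀ g, V.character g = V'.character g := by
  have := Fintype.ofFinite H
  have hH : (Nat.card H : ℂ) ≠ 0 := Nat.cast_ne_zero.2 Nat.card_pos.ne'
  have e : (Nat.card H : ℂ) * (a * a) = Nat.card H * (b * b) := by
    rw [← aux_norm V]
    conv_rhs => rw [aux_norm V, ← aux_norm V']
    rw [Finset.sum_mul, Finset.sum_mul]
    refine Finset.sum_congr rfl fun g _ => ?_
    calc _ = (V.character g * a) * (V.character g⁻¹ * a) := by ring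
      _ = _ := by rw [h, h]; ring
  have e2 := mul_left_cancel₀ hH e
  have e3 : a * a = b * b := by exact_mod_cast e2
  have e4 : a = b := Nat.mul_self_inj.1 e3
  subst e4
  intro g
  exact mul_right_cancel₀ (Nat.cast_ne_zero.2 ha) (h g)

open Representation in
/-- Every nonzero representation contains a simple one. -/
lemma aux_exists_simple {H X : Type} [Group H] [Finite H] [AddCommGroup X] [Module ℂ X]
    [FiniteDimensional ℂ X] [Nontrivial X] (ρ : Representation ℂ H X) :
    ∃ S : FDRep ℂ H, Simple S ∧ ∃ j : IntertwiningMap S.ρ ρ, Function.Injective j := by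
  classical
  have := Fintype.ofFinite H
  have h0 : (Nat.card H : ℂ) ≠ 0 := Nat.cast_ne_zero.2 Nat.card_pos.ne'
  have := invertibleOfNonzero h0
  have hex : ∃ n, ∃ σ : Subrepresentation ρ, σ.toSubmodule ≠ ⊥ ∧
      Module.finrank ℂ σ.toSubmodule = n := ⟨_, ⊤, top_ne_bot (α := Submodule ℂ X), rfl⟩
  obtain ⟨σ, hσ, hn⟩ := Nat.find_spec hex
  have hmin : ∀ τ : Subrepresentation ρ, τ.toSubmodule ≠ ⊥ →
      Module.finrank ℂ σ.toSubmodule ≤ Module.finrank ℂ τ.toSubmodule := by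
    intro τ hτ
    rw [hn]
    exact Nat.find_min' hex ⟨τ, hτ, rfl⟩
  have hirr : IsIrreducible σ.toRepresentation := by
    have hnt : Nontrivial σ.toSubmodule := (Submodule.nontrivial_iff_ne_bot).2 hσ
    refine { exists_pair_ne := ⟨⊥, ⊤, ?_⟩, eq_bot_or_eq_top := ?_ }
    · intro h
      have h' : (⊥ : Submodule ℂ σ.toSubmodule) = ⊤ :=
        congrArg Subrepresentation.toSubmodule h
      exact bot_ne_top h'
    · intro τ
      by_cases hb : τ.toSubmodule = ⊥
      · left
        exact Subrepresentation.toSubmodule_injective hb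
      · right
        let τ' : Subrepresentation ρ :=
          { toSubmodule := τ.toSubmodule.map σ.toSubmodule.subtype
            apply_mem_toSubmodule := by
              rintro g _ ⟨v, hv, rfl⟩
              exact ⟨σ.toRepresentation g v, τ.apply_mem_toSubmodule g hv, rfl⟩ }
        have h1 : τ'.toSubmodule ≠ ⊥ := by
          intro h
          apply hb
          apply Submodule.map_injective_of_injective (Submodule.subtype_injective σ.toSubmodule)
          rw [Submodule.map_bot]
          exact h
        have h2 := hmin τ' h1
        have h3 : Module.finrank ℂ τ'.toSubmodule = Module.finrank ℂ τ.toSubmodule :=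
          (Submodule.equivMapOfInjective _ (Submodule.subtype_injective _) τ.toSubmodule).finrank_eq.symm
        rw [h3] at h2
        apply Subrepresentation.toSubmodule_injective
        exact Submodule.eq_top_of_finrank_eq (le_antisymm (Submodule.finrank_le _) h2)
  refine ⟨FDRep.of σ.toRepresentation, ?_, ⟨σ.toSubmodule.subtype, fun g => rfl⟩,
    Submodule.subtype_injective _⟩
  rw [FDRep.simple_iff_char_is_norm_one]
  have h := char_orthonormal σ.toRepresentation σ.toRepresentation
  rw [if_pos ⟨Representation.Equiv.refl _⟩, inv_mul_eq_one₀ h0] at h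
  exact h.symm

open Representation in
lemma aux_iso_of_ne_zero {H : Type} [Group H] [Finite H] (V W : FDRep ℂ H) [Simple V] [Simple W]
    (f : IntertwiningMap V.ρ W.ρ) (hf : f ≠ 0) : V.character = W.character := by
  classical
  have := Fintype.ofFinite H
  have h0 : (Nat.card H : ℂ) ≠ 0 := Nat.cast_ne_zero.2 Nat.card_pos.ne'
  have := invertibleOfNonzero h0
  have h := card_inv_mul_sum_char_mul_char_eq_finrank V.ρ W.ρ
  have h2 := FDRep.char_orthonormal W V
  by_cases hi : Nonempty (W ≅ V)
  · exact (FDRep.char_iso hi.some).symm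
  · rw [if_neg hi] at h2
    have h3 : (0 : ℂ) = Module.finrank ℂ (IntertwiningMap V.ρ W.ρ) := h2.symm.trans h
    have h4 : Module.finrank ℂ (IntertwiningMap V.ρ W.ρ) = 0 := by exact_mod_cast h3.symm
    have : Module.Finite ℂ (IntertwiningMap V.ρ W.ρ) :=
      Module.Finite.of_injective (IntertwiningMap.toLinearMapl V.ρ W.ρ)
        (IntertwiningMap.toLinearMap_injective V.ρ W.ρ)
    have := Module.finrank_zero_iff.1 h4
    exact absurd (Subsingleton.elim f 0) hf

open Representation in
lemma aux_decomp {A B : Type} [Group A] [Group B] [Finite A] [Finite B]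
    (U : FDRep ℂ (A × B)) [Simple U] :
    ∃ (V : FDRep ℂ A) (W : FDRep ℂ B), Simple V ∧ Simple W ∧
      ∀ x, U.character x = V.character x.1 * W.character x.2 := by
  have hnt : Nontrivial U := Module.finrank_pos_iff.1 (aux_pos U)
  let ρA : Representation ℂ A U := (U.ρ.comp (MonoidHom.inl A B) : A →* (U →ₗ[ℂ] U))
  obtain ⟨S, hS, i, hi⟩ := aux_exists_simple ρA
  have hfin : Module.Finite ℂ (IntertwiningMap S.ρ ρA) :=
    Module.Finite.of_injective (IntertwiningMap.toLinearMapl S.ρ ρA)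
      (IntertwiningMap.toLinearMap_injective S.ρ ρA)
  have hSn : Nontrivial S := Module.finrank_pos_iff.1 (aux_pos S)
  have hXn : Nontrivial (IntertwiningMap S.ρ ρA) := by
    refine ⟨i, 0, fun h => ?_⟩
    obtain ⟨s, hs⟩ := exists_ne (0 : S)
    apply hs
    apply hi
    rw [h]
    simp
  have hcomm : ∀ (a : A) (b : B) (u : U),
      U.ρ ((1 : A), b) (U.ρ (a, (1 : B)) u) = U.ρ (a, (1 : B)) (U.ρ ((1 : A), b) u) := by
    intro a b u
    rw [← Module.End.mul_apply, ← Module.End.mul_apply, ← map_mul, ← map_mul]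
    simp
  let ρB : Representation ℂ B (IntertwiningMap S.ρ ρA) :=
    { toFun := fun b =>
        { toFun := fun φ => ⟨U.ρ ((1 : A), b) ∘ₗ φ.toLinearMap, fun a => by
            ext s
            change U.ρ ((1 : A), b) (φ (S.ρ a s)) = U.ρ (a, (1 : B)) (U.ρ ((1 : A), b) (φ s))
            rw [← hcomm, φ.isIntertwining]
            rfl⟩
          map_add' := fun φ ψ => by
            ext s
            exact map_add (U.ρ ((1 : A), b)) (φ s) (ψ s)
          map_smul' := fun c φ => by
            ext s
            exact map_smul (U.ρ ((1 : A), b)) c (φ s) }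
      map_one' := by
        ext φ s
        change U.ρ ((1 : A), (1 : B)) (φ s) = φ s
        rw [← Prod.one_eq_mk, map_one]
        rfl
      map_mul' := fun b b' => by
        ext φ s
        change U.ρ ((1 : A), b * b') (φ s) = U.ρ ((1 : A), b) (U.ρ ((1 : A), b') (φ s))
        rw [← Module.End.mul_apply, ← map_mul]
        simp }
  obtain ⟨W, hW, j, hj⟩ := aux_exists_simple ρB
  have hWn : Nontrivial W := Module.finrank_pos_iff.1 (aux_pos W)
  refine ⟨S, W, hS, hW, fun x => ?_⟩
  have := extProd_simple S W
  let bil : S →ₗ[ℂ] W →ₗ[ℂ] U :=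
    ((IntertwiningMap.toLinearMapl S.ρ ρA) ∘ₗ j.toLinearMap).flip
  have hbil : ∀ s w, bil s w = j w s := fun _ _ => rfl
  let F : IntertwiningMap (extProd S W).ρ U.ρ := ⟨TensorProduct.lift bil, fun x => by
    apply TensorProduct.ext'
    intro s w
    change bil (S.ρ x.1 s) (W.ρ x.2 w) = U.ρ x (bil s w)
    rw [hbil, hbil, j.isIntertwining]
    change U.ρ ((1 : A), x.2) (j w (S.ρ x.1 s)) = _
    rw [(j w).isIntertwining]
    change U.ρ ((1 : A), x.2) (U.ρ (x.1, (1 : B)) (j w s)) = _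
    rw [← Module.End.mul_apply, ← map_mul]
    simp⟩
  have hF : F ≠ 0 := by
    intro h
    obtain ⟨w, hw⟩ := exists_ne (0 : W)
    apply hw
    apply hj
    rw [map_zero]
    ext s
    have h2 : F (s ⊗ₜ[ℂ] w) = 0 := by rw [h]; rfl
    exact h2
  rw [← aux_iso_of_ne_zero _ _ F hF, extProd_char]

lemma aux_avg {α β γ : Type} (X : Set α) (Y : Set β) (dX : α → ℕ) (dY : β → ℕ) (dT : γ → ℕ)
    (Φ : α × β → γ) (hinj : Set.InjOn Φ (X ×ˢ Y)) 
    (hd : ∀ p ∈ X ×ˢ Y, dT (Φ p) = dX p.1 * dY p.2) :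
    (∑ᶠ t ∈ Φ '' (X ×ˢ Y), (dT t : ℝ)) / (Φ '' (X ×ˢ Y)).ncard =
      ((∑ᶠ x ∈ X, (dX x : ℝ)) / X.ncard) * ((∑ᶠ y ∈ Y, (dY y : ℝ)) / Y.ncard) := by
  rw [Set.InjOn.ncard_image hinj, Set.ncard_prod]
  by_cases hX : X.Finite
  swap
  · simp [Set.Infinite.ncard hX]
  by_cases hY : Y.Finite
  swap
  · simp [Set.Infinite.ncard hY]
  rw [finsum_mem_image hinj, div_mul_div_comm, Nat.cast_mul]
  congr 1
  rw [finsum_mem_congr rfl (g := fun p => (dX p.1 * dY p.2 : ℝ)) (fun p hp => by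
    rw [hd p hp, Nat.cast_mul])]
  lift X to Finset α using hX
  lift Y to Finset β using hY
  rw [← Finset.coe_product, finsum_mem_coe_finset, finsum_mem_coe_finset, finsum_mem_coe_finset,
    Finset.sum_mul_sum, Finset.sum_product]

lemma aux_deg {H : Type} [Group H] {χ : H → ℂ} (h : χ ∈ IrrChar H) : χ 1 = charDeg χ := by
  obtain ⟨V, hV, rfl⟩ := h
  simp [charDeg, FDRep.char_one]

lemma aux_deg_ne {H : Type} [Group H] [Finite H] {χ : H → ℂ} (h : χ ∈ IrrChar H) :
    charDeg χ ≠ 0 := by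
  intro h0
  have h1 := aux_deg h
  obtain ⟨V, hV, rfl⟩ := h
  rw [h0] at h1
  exact aux_char_one_ne V (by simpa using h1)

lemma aux_prop' {H : Type} [Group H] [Finite H] {χ χ' : H → ℂ} (h : χ ∈ IrrChar H)
    (h' : χ' ∈ IrrChar H) (a b : ℕ) (ha : a ≠ 0) (e : ∀ g, χ g * a = χ' g * b) : χ = χ' := by
  obtain ⟨V, hV, rfl⟩ := h
  obtain ⟨V', hV', rfl⟩ := h'
  funext g
  exact aux_prop V V' a b ha e g

lemma aux_main {A B G Z : Type} [Group A] [Group B] [Group G] [Group Z]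
    [Finite A] [Finite B] [Finite G] [Finite Z]
    (f : A × B →* G) (hf : Function.Surjective f)
    (iA : Z →* A) (iB : Z →* B) (i : Z →* G)
    (hA : ∀ h z, h * iA z = iA z * h) (hB : ∀ h z, h * iB z = iB z * h)
    (hG : ∀ h z, h * i z = i z * h)
    (hiA : ∀ z, f (iA z, 1) = i z) (hiB : ∀ z, f (1, iB z) = i z)
    (hker : ∀ x, f x = 1 → ∃ z, x = (iA z, iB z⁻¹))
    (lam : Z → ℂ) (hlam : lam ∈ IrrChar Z) (hdeg : charDeg lam = 1) :
    acdOver i lam = acdOver iA lam * acdOver iB lam := by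
  have eA : {χ ∈ IrrChar A | ∑ᶠ z : Z, χ (iA z) * starRingEnd ℂ (lam z) ≠ 0} =
      {χ ∈ IrrChar A | OverLam iA lam χ} := Set.ext fun χ => and_congr_right fun h =>
    aux_over_iff iA (map_mul iA) hA lam hlam hdeg χ h
  have eB : {χ ∈ IrrChar B | ∑ᶠ z : Z, χ (iB z) * starRingEnd ℂ (lam z) ≠ 0} =
      {χ ∈ IrrChar B | OverLam iB lam χ} := Set.ext fun χ => and_congr_right fun h =>
    aux_over_iff iB (map_mul iB) hB lam hlam hdeg χ h
  have eG : {χ ∈ IrrChar G | ∑ᶠ z : Z, χ (i z) * starRingEnd ℂ (lam z) ≠ 0} =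
      {χ ∈ IrrChar G | OverLam i lam χ} := Set.ext fun χ => and_congr_right fun h =>
    aux_over_iff i (map_mul i) hG lam hlam hdeg χ h
  obtain ⟨lm, ln⟩ := aux_lam lam hlam hdeg
  have hs := Function.surjInv_eq hf
  let Φ : (A → ℂ) × (B → ℂ) → (G → ℂ) := fun p g =>
    p.1 (Function.surjInv hf g).1 * p.2 (Function.surjInv hf g).2
  -- gluing
  have glue : ∀ p ∈ {χ ∈ IrrChar A | OverLam iA lam χ} ×ˢ {χ ∈ IrrChar B | OverLam iB lam χ},
      Φ p ∈ IrrChar G ∧ ∀ x, Φ p (f x) = p.1 x.1 * p.2 x.2 := by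
    rintro ⟨α, β⟩ ⟨⟨⟨V, hV, rfl⟩, hoV⟩, ⟨⟨W, hW, rfl⟩, hoW⟩⟩
    obtain ⟨U, hU, hc⟩ := aux_glue f hf V W (by
      intro x hx
      obtain ⟨z, rfl⟩ := hker x hx
      have h1 := aux_over_scalar iA lam hA V hoV z
      have h2 := aux_over_scalar iB lam hB W hoW z⁻¹
      have h3 : lam z * lam z⁻¹ = 1 := by
        rw [← lm, mul_inv_cancel]
        have h4 := lm 1 1
        have h5 : lam 1 ≠ 0 := fun h => by simpa [h] using ln 1
        rw [mul_one] at h4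
        exact mul_left_cancel₀ h5 (by rw [← h4, mul_one])
      change TensorProduct.map (V.ρ (iA z)) (W.ρ (iB z⁻¹)) = 1
      rw [h1, h2, TensorProduct.map_smul_left, TensorProduct.map_smul_right, smul_smul, h3,
        one_smul]
      exact TensorProduct.map_id)
    have hΦ : Φ (fun g => V.character g, fun g => W.character g) = fun g => U.character g := by
      funext g
      have := hc (Function.surjInv hf g)
      rw [hs] at this
      exact this.symm
    rw [hΦ]
    exact ⟨⟨U, hU, rfl⟩, hc⟩
  have himg : {χ ∈ IrrChar G | OverLam i lam χ} =
      Φ '' ({χ ∈ IrrChar A | OverLam iA lam χ} ×ˢ {χ ∈ IrrChar B | OverLam iB lam χ}) := by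
    apply Set.Subset.antisymm
    · rintro χ ⟨⟨U, hU, rfl⟩, ho⟩
      let P : FDRep ℂ (A × B) :=
        FDRep.of ((U.ρ.comp f : A × B →* (U →ₗ[ℂ] U)) : Representation ℂ (A × B) U)
      have hP : ∀ k, P.character k = U.character (f k) := fun k => rfl
      have hPs : Simple P := (aux_simple_pullback f hf U P hP).1 hU
      obtain ⟨V, W, hV, hW, hc⟩ := aux_decomp P
      simp only [hP] at hc
      refine ⟨(fun g => V.character g, fun g => W.character g),
        ⟨⟨⟨V, hV, rfl⟩, ?_⟩, ⟨⟨W, hW, rfl⟩, ?_⟩⟩, ?_⟩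
      · intro a z
        apply mul_right_cancel₀ (aux_char_one_ne W)
        have h1 := hc (a * iA z, 1)
        have h2 := hc (a, 1)
        have h3 := ho (f (a, 1)) z
        simp only at h1 h2 h3 ⊢
        rw [← h1, mul_right_comm, ← h2, ← h3, ← hiA, ← map_mul]
        simp
      · intro b z
        apply mul_left_cancel₀ (aux_char_one_ne V)
        have h1 := hc (1, b * iB z)
        have h2 := hc (1, b)
        have h3 := ho (f (1, b)) z
        simp only at h1 h2 h3 ⊢
        rw [← h1, ← mul_assoc, ← h2, ← h3, ← hiB, ← map_mul]
        simp
      · funext g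
        have := hc (Function.surjInv hf g)
        rw [hs] at this
        exact this.symm
    · rintro _ ⟨p, hp, rfl⟩
      obtain ⟨h1, h2⟩ := glue p hp
      refine ⟨h1, fun g z => ?_⟩
      obtain ⟨x, rfl⟩ := hf g
      rw [← hiA, ← map_mul, h2, h2]
      have := hp.1.2 x.1 z
      simp only [Prod.fst_mul, Prod.snd_mul, mul_one, this]
      ring
  unfold acdOver acdRel
  rw [eA, eB, eG, himg]
  apply aux_avg
  · intro p hp q hq he
    have h1 := (glue p hp).2
    have h2 := (glue q hq).2
    rw [he] at h1
    have h3 : ∀ x : A × B, p.1 x.1 * p.2 x.2 = q.1 x.1 * q.2 x.2 := fun x =>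
      (h1 x).symm.trans (h2 x)
    refine Prod.ext ?_ ?_
    · refine aux_prop' hp.1.1 hq.1.1 (charDeg p.2) (charDeg q.2) (aux_deg_ne hp.2.1) fun a => ?_
      rw [← aux_deg hp.2.1, ← aux_deg hq.2.1]
      exact h3 (a, 1)
    · refine aux_prop' hp.2.1 hq.2.1 (charDeg p.1) (charDeg q.1) (aux_deg_ne hp.1.1) fun b => ?_
      rw [← aux_deg hp.1.1, ← aux_deg hq.1.1, mul_comm, mul_comm (q.2 b)]
      exact h3 (1, b)
  · intro p hp
    obtain ⟨h1, h2⟩ := glue p hp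
    have h3 := h2 1
    rw [map_one, aux_deg h1] at h3
    have h4 : ((charDeg (Φ p) : ℕ) : ℂ) = charDeg p.1 * charDeg p.2 := by
      rw [← aux_deg hp.1.1, ← aux_deg hp.2.1]
      exact h3
    exact_mod_cast h4

/-- If `G = MC` is a central product with `Z = M ∩ C`, then for every linear
character `λ` of `Z` one has `acd(G|λ) = acd(M|λ) ⬝ acd(C|λ)`. -/
theorem acdOver_central_product (G : Type) [Group G] [Finite G] (M C : Subgroup G)
    (hprod : ∀ g : G, ∃ m ∈ M, ∃ c ∈ C, g = m * c)
    (hcomm : ∀ m ∈ M, ∀ c ∈ C, m * c = c * m)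
    (lam : ↥(M ⊓ C) → ℂ) (hlam : lam ∈ IrrChar ↥(M ⊓ C)) (hdeg : charDeg lam = 1) :
    acdOver (fun z : ↥(M ⊓ C) => (z : G)) lam =
      acdOver (Subgroup.inclusion (inf_le_left : M ⊓ C ≤ M)) lam *
        acdOver (Subgroup.inclusion (inf_le_right : M ⊓ C ≤ C)) lam := by
  let f : M × C →* G :=
    { toFun := fun x => x.1 * x.2
      map_one' := by simp
      map_mul' := fun x y => by
        have h := hcomm y.1 y.1.2 x.2 x.2.2
        simp only [Prod.fst_mul, Prod.snd_mul, Subgroup.coe_mul, mul_assoc]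
        rw [← mul_assoc (y.1 : G), h, mul_assoc] }
  refine aux_main f ?_ (Subgroup.inclusion (inf_le_left : M ⊓ C ≤ M))
    (Subgroup.inclusion (inf_le_right : M ⊓ C ≤ C)) (M ⊓ C).subtype ?_ ?_ ?_ ?_ ?_ ?_
    lam hlam hdeg
  · intro g
    obtain ⟨m, hm, c, hc, rfl⟩ := hprod g
    exact ⟨(⟨m, hm⟩, ⟨c, hc⟩), rfl⟩
  · intro h z
    exact Subtype.ext (hcomm h h.2 z z.2.2)
  · intro h z
    exact Subtype.ext (hcomm z z.2.1 h h.2).symm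
  · intro g z
    obtain ⟨m, hm, c, hc, rfl⟩ := hprod g
    have h1 := hcomm m hm z z.2.2
    have h2 := hcomm z z.2.1 c hc
    change m * c * (z : G) = z * (m * c)
    rw [mul_assoc, ← h2, ← mul_assoc, h1, mul_assoc]
  · intro z
    exact mul_one _
  · intro z
    exact one_mul _
  · rintro ⟨⟨m, hm⟩, ⟨c, hc⟩⟩ hx
    have hx' : m * c = 1 := hx
    have hmc : m = c⁻¹ := eq_inv_of_mul_eq_one_left hx'
    refine ⟨⟨m, hm, by rw [hmc]; exact C.inv_mem hc⟩, Prod.ext rfl (Subtype.ext ?_)⟩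
    change c = m⁻¹
    rw [hmc, inv_inv]
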